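/- The weight strictly decreases under reduction of well-formed soft processes: if ⊢ Q is a well-formed SHOπ process in the empty context and Q → P, then W(Q) > W(P), where W(P) = W_{D(P)}(P). -/

import Mathlib

/-! Reduction never takes place under a variable binder, so for a process that is well formed in
the empty context the value `U` substituted by a redex is closed. Substituting a closed value leaves
the occurrence counts of all the bound variables unchanged, so the duplicability factor does not
increase (`dP_substP_le`). The weight of the result is controlled by the *weighted* number of
occurrences `occP n k P`, in which every enclosing box multiplies by `n`: each occurrence of
weight `1` is replaced by one of weight `wV n U` (`wP_substP`).

Well-formation determines that weighted number (`occP_spec`): it is `1` for a linear variable, `n`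
for a `!`-variable, and the plain number of occurrences, which is at most the duplicability factor,
for a `§`-variable. Hence for `n` at least the duplicability factor, the `n`-parametrized weight
strictly decreases in each redex: in the nonlinear cases at most `n` weighted copies of `V` replace
the box `!V`, whose weight is `n * wV n V + 1`. Structural congruence preserves well-formation,
duplicability factor and weight, so this extends to all reductions (`Red.measures`). Finally `wP n`
is monotone in `n`, which accounts for the change of the parameter from `dP Q` to `dP P`. -/

/-! Syntax of LHOπ / SHOπ processes and values (variables in de Bruijn style,
channels as names). -/

mutual
inductive Val : Type
  | star : Val
  | var : ℕ → Val
  | lam : Proc → Val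
  | blam : Proc → Val
  | bang : Val → Val
inductive Proc : Type
  | nil : Proc
  | par : Proc → Proc → Proc
  | inp : ℕ → Proc → Proc
  | binp : ℕ → Proc → Proc
  | out : ℕ → Val → Proc → Proc
  | nu : ℕ → Proc → Proc
  | app : Val → Val → Proc
end

/-! Lifting and capture-avoiding substitution. -/

mutual
def liftV (c : ℕ) : Val → Val
  | .star => .star
  | .var x => if x < c then .var x else .var (x + 1)
  | .lam P => .lam (liftP (c + 1) P)
  | .blam P => .blam (liftP (c + 1) P)
  | .bang V => .bang (liftV c V)
def liftP (c : ℕ) : Proc → Proc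
  | .nil => .nil
  | .par P Q => .par (liftP c P) (liftP c Q)
  | .inp a P => .inp a (liftP (c + 1) P)
  | .binp a P => .binp a (liftP (c + 1) P)
  | .out a V P => .out a (liftV c V) (liftP c P)
  | .nu a P => .nu a (liftP c P)
  | .app V W => .app (liftV c V) (liftV c W)
end

mutual
def substV (U : Val) (k : ℕ) : Val → Val
  | .star => .star
  | .var x => if x = k then U else if x < k then .var x else .var (x - 1)
  | .lam P => .lam (substP (liftV 0 U) (k + 1) P)
  | .blam P => .blam (substP (liftV 0 U) (k + 1) P)
  | .bang V => .bang (substV U k V)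
def substP (U : Val) (k : ℕ) : Proc → Proc
  | .nil => .nil
  | .par P Q => .par (substP U k P) (substP U k Q)
  | .inp a P => .inp a (substP (liftV 0 U) (k + 1) P)
  | .binp a P => .binp a (substP (liftV 0 U) (k + 1) P)
  | .out a V P => .out a (substV U k V) (substP U k P)
  | .nu a P => .nu a (substP U k P)
  | .app V W => .app (substV U k V) (substV U k W)
end

/-! Free channels and channel renaming (for α-conversion of restrictions). -/

mutual
def fcV : Val → Finset ℕ
  | .star => ∅
  | .var _ => ∅
  | .lam P => fcP P
  | .blam P => fcP P
  | .bang V => fcV V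
def fcP : Proc → Finset ℕ
  | .nil => ∅
  | .par P Q => fcP P ∪ fcP Q
  | .inp a P => insert a (fcP P)
  | .binp a P => insert a (fcP P)
  | .out a V P => insert a (fcV V ∪ fcP P)
  | .nu a P => fcP P \ {a}
  | .app V W => fcV V ∪ fcV W
end

mutual
def chV (a b : ℕ) : Val → Val
  | .star => .star
  | .var x => .var x
  | .lam P => .lam (chP a b P)
  | .blam P => .blam (chP a b P)
  | .bang V => .bang (chV a b V)
def chP (a b : ℕ) : Proc → Proc
  | .nil => .nil
  | .par P Q => .par (chP a b P) (chP a b Q)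
  | .inp c P => .inp (if c = a then b else c) (chP a b P)
  | .binp c P => .binp (if c = a then b else c) (chP a b P)
  | .out c V P => .out (if c = a then b else c) (chV a b V) (chP a b P)
  | .nu c P => if c = a then .nu c P else .nu c (chP a b P)
  | .app V W => .app (chV a b V) (chV a b W)
end

/-! Structural congruence: the smallest congruence containing α-equivalence
(for channel restrictions; α-equivalence of variables is syntactic identity in
de Bruijn style), associativity and commutativity of parallel composition,
exchange of restrictions, and scope extrusion.  No garbage-collection laws. -/

mutual
inductive SCV : Val → Val → Prop
  | refl (V) : SCV V V
  | symm : SCV V W → SCV W V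
  | trans : SCV U V → SCV V W → SCV U W
  | lam : SCP P Q → SCV (.lam P) (.lam Q)
  | blam : SCP P Q → SCV (.blam P) (.blam Q)
  | bang : SCV V W → SCV (.bang V) (.bang W)
inductive SCP : Proc → Proc → Prop
  | refl (P) : SCP P P
  | symm : SCP P Q → SCP Q P
  | trans : SCP P Q → SCP Q R → SCP P R
  | par : SCP P P' → SCP Q Q' → SCP (.par P Q) (.par P' Q')
  | inp : SCP P Q → SCP (.inp a P) (.inp a Q)
  | binp : SCP P Q → SCP (.binp a P) (.binp a Q)
  | out : SCV V W → SCP P Q → SCP (.out a V P) (.out a W Q)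
  | nu : SCP P Q → SCP (.nu a P) (.nu a Q)
  | app : SCV V V' → SCV W W' → SCP (.app V W) (.app V' W')
  | assoc : SCP (.par P (.par Q R)) (.par (.par P Q) R)
  | comm : SCP (.par P Q) (.par Q P)
  | nuswap : SCP (.nu a (.nu b P)) (.nu b (.nu a P))
  | extrude : a ∉ fcP Q → SCP (.nu a (.par P Q)) (.par (.nu a P) Q)
  | alpha : b ∉ fcP P → SCP (.nu a P) (.nu b (chP a b P))
end

/-! Reduction. -/

inductive Red : Proc → Proc → Prop
  | comm : Red (.par (.out a V P) (.inp a Q)) (.par P (substP V 0 Q))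
  | bcomm : Red (.par (.out a (.bang V) P) (.binp a Q)) (.par P (substP V 0 Q))
  | beta : Red (.app (.lam P) V) (substP V 0 P)
  | bbeta : Red (.app (.blam P) (.bang V)) (substP V 0 P)
  | parL : Red P Q → Red (.par P R) (.par Q R)
  | res : Red P Q → Red (.nu a P) (.nu a Q)
  | struct : SCP P P' → Red P' Q' → SCP Q' Q → Red P Q

/-- `m`-step reduction. -/
inductive RedN : ℕ → Proc → Proc → Prop
  | zero : RedN 0 P P
  | succ : Red P Q → RedN n Q R → RedN (n + 1) P R

/-! SHOπ well-formation.  A context entry is `none` (absent) or a marker: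
linear `x`, nonlinear `!x`, or nonlinear `§x`. -/

inductive SMark : Type
  | lin : SMark
  | bang : SMark
  | para : SMark
deriving DecidableEq

abbrev Ctx := List (Option SMark)

/-- Contexts made only of §-marked (or absent) variables: these admit
weakening. -/
def ParaOnly (Γ : Ctx) : Prop := ∀ e ∈ Γ, e = none ∨ e = some .para

/-- Splitting one context entry between the two premises of a binary rule:
linear and !-variables go to exactly one premise, §-variables may be shared
(implicit contraction). -/
inductive SplitE : Option SMark → Option SMark → Option SMark → Prop
  | none : SplitE none none none
  | linL : SplitE (some .lin) (some .lin) none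
  | linR : SplitE (some .lin) none (some .lin)
  | bangL : SplitE (some .bang) (some .bang) none
  | bangR : SplitE (some .bang) none (some .bang)
  | paraL : SplitE (some .para) (some .para) none
  | paraR : SplitE (some .para) none (some .para)
  | paraB : SplitE (some .para) (some .para) (some .para)

inductive Split : Ctx → Ctx → Ctx → Prop
  | nil : Split [] [] []
  | cons : SplitE e e₁ e₂ → Split Γ Γ₁ Γ₂ → Split (e :: Γ) (e₁ :: Γ₁) (e₂ :: Γ₂)

/-- Entry-wise relation between the context of `V` and the context of `!V`:
linear variables become !-marked ones, and weakening by §-variables is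
allowed.  §- and !-variables may not appear inside a !-box. -/
inductive BangE : Option SMark → Option SMark → Prop
  | lin : BangE (some .lin) (some .bang)
  | none : BangE none none
  | para : BangE none (some .para)

inductive BangCtx : Ctx → Ctx → Prop
  | nil : BangCtx [] []
  | cons : BangE e e' → BangCtx Γ Γ' → BangCtx (e :: Γ) (e' :: Γ')

mutual
inductive WfV : Ctx → Val → Prop
  | star : ParaOnly Γ → WfV Γ .star
  | varLin : ParaOnly Γ → WfV (some .lin :: Γ) (.var 0)
  | varPara : ParaOnly Γ → WfV (some .para :: Γ) (.var 0)
  | varThere : (e = none ∨ e = some SMark.para) → WfV Γ (.var x) →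
      WfV (e :: Γ) (.var (x + 1))
  | lam : WfP (some .lin :: Γ) P → WfV Γ (.lam P)
  | blamBang : WfP (some .bang :: Γ) P → WfV Γ (.blam P)
  | blamPara : WfP (some .para :: Γ) P → WfV Γ (.blam P)
  | bang : BangCtx Γ Δ → WfV Γ V → WfV Δ (.bang V)
inductive WfP : Ctx → Proc → Prop
  | nil : ParaOnly Γ → WfP Γ .nil
  | par : Split Γ Γ₁ Γ₂ → WfP Γ₁ P → WfP Γ₂ Q → WfP Γ (.par P Q)
  | inp : WfP (some .lin :: Γ) P → WfP Γ (.inp a P)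
  | binpBang : WfP (some .bang :: Γ) P → WfP Γ (.binp a P)
  | binpPara : WfP (some .para :: Γ) P → WfP Γ (.binp a P)
  | out : Split Γ Γ₁ Γ₂ → WfV Γ₁ V → WfP Γ₂ P → WfP Γ (.out a V P)
  | nu : WfP Γ P → WfP Γ (.nu a P)
  | app : Split Γ Γ₁ Γ₂ → WfV Γ₁ V → WfV Γ₂ W → WfP Γ (.app V W)
end

/-! Measures: size, box depth, free occurrences, duplicability factor,
parametrized weight, weight. -/

mutual
def sizeV : Val → ℕ
  | .star => 1
  | .var _ => 1
  | .lam P => sizeP P + 1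
  | .blam P => sizeP P + 1
  | .bang V => sizeV V + 1
def sizeP : Proc → ℕ
  | .nil => 1
  | .par P Q => sizeP P + sizeP Q + 1
  | .inp _ P => sizeP P + 1
  | .binp _ P => sizeP P + 1
  | .out _ V P => sizeV V + sizeP P + 1
  | .nu _ P => sizeP P + 1
  | .app V W => sizeV V + sizeV W + 1
end

mutual
def bdV : Val → ℕ
  | .star => 0
  | .var _ => 0
  | .lam P => bdP P
  | .blam P => bdP P
  | .bang V => bdV V + 1
def bdP : Proc → ℕ
  | .nil => 0
  | .par P Q => max (bdP P) (bdP Q)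
  | .inp _ P => bdP P
  | .binp _ P => bdP P
  | .out _ V P => max (bdV V) (bdP P)
  | .nu _ P => bdP P
  | .app V W => max (bdV V) (bdV W)
end

-- Number of free occurrences of the variable (de Bruijn index) `k`.
mutual
def foV (k : ℕ) : Val → ℕ
  | .star => 0
  | .var x => if x = k then 1 else 0
  | .lam P => foP (k + 1) P
  | .blam P => foP (k + 1) P
  | .bang V => foV k V
def foP (k : ℕ) : Proc → ℕ
  | .nil => 0
  | .par P Q => foP k P + foP k Q
  | .inp _ P => foP (k + 1) P
  | .binp _ P => foP (k + 1) P
  | .out _ V P => foV k V + foP k P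
  | .nu _ P => foP k P
  | .app V W => foV k V + foV k W
end

-- Duplicability factor.
mutual
def dV : Val → ℕ
  | .star => 1
  | .var _ => 1
  | .lam P => max (dP P) (foP 0 P)
  | .blam P => max (dP P) (foP 0 P)
  | .bang V => dV V
def dP : Proc → ℕ
  | .nil => 1
  | .par P Q => max (dP P) (dP Q)
  | .inp _ P => max (dP P) (foP 0 P)
  | .binp _ P => max (dP P) (foP 0 P)
  | .out _ V P => max (dV V) (dP P)
  | .nu _ P => dP P
  | .app V W => max (dV V) (dV W)
end

-- `n`-parametrized weight.
mutual
def wV (n : ℕ) : Val → ℕ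
  | .star => 1
  | .var _ => 1
  | .lam P => wP n P
  | .blam P => wP n P
  | .bang V => n * wV n V + 1
def wP (n : ℕ) : Proc → ℕ
  | .nil => 1
  | .par P Q => wP n P + wP n Q + 1
  | .inp _ P => wP n P + 1
  | .binp _ P => wP n P + 1
  | .out _ V P => wV n V + wP n P
  | .nu _ P => wP n P
  | .app V W => wV n V + wV n W + 1
end

/-- The weight of a process. -/
def weightP (P : Proc) : ℕ := wP (dP P) P
/-- The weight of a value. -/
def weightV (V : Val) : ℕ := wV (dV V) V


/-! ### Closed values and substitution -/

-- A term without free variables from `c` on is unchanged by lifting at `c`.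
mutual
theorem liftV_eq_self : ∀ (V : Val) (c : ℕ), (∀ k, c ≤ k → foV k V = 0) → liftV c V = V
  | .star, _, _ => rfl
  | .var x, c, h => by
      have hx : x < c := by
        by_contra hx
        simpa [foV] using h x (by omega)
      simp [liftV, hx]
  | .lam P, c, h => by
      rw [liftV, liftP_eq_self P (c + 1) fun k hk => ?_]
      obtain ⟨j, rfl⟩ : ∃ j, k = j + 1 := ⟨k - 1, by omega⟩
      exact h j (by omega)
  | .blam P, c, h => by
      rw [liftV, liftP_eq_self P (c + 1) fun k hk => ?_]
      obtain ⟨j, rfl⟩ : ∃ j, k = j + 1 := ⟨k - 1, by omega⟩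
      exact h j (by omega)
  | .bang V, c, h => by rw [liftV, liftV_eq_self V c h]
theorem liftP_eq_self : ∀ (P : Proc) (c : ℕ), (∀ k, c ≤ k → foP k P = 0) → liftP c P = P
  | .nil, _, _ => rfl
  | .par P Q, c, h => by
      simp only [foP, Nat.add_eq_zero_iff] at h
      rw [liftP, liftP_eq_self P c fun k hk => (h k hk).1,
        liftP_eq_self Q c fun k hk => (h k hk).2]
  | .inp a P, c, h => by
      rw [liftP, liftP_eq_self P (c + 1) fun k hk => ?_]
      obtain ⟨j, rfl⟩ : ∃ j, k = j + 1 := ⟨k - 1, by omega⟩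
      exact h j (by omega)
  | .binp a P, c, h => by
      rw [liftP, liftP_eq_self P (c + 1) fun k hk => ?_]
      obtain ⟨j, rfl⟩ : ∃ j, k = j + 1 := ⟨k - 1, by omega⟩
      exact h j (by omega)
  | .out a V P, c, h => by
      simp only [foP, Nat.add_eq_zero_iff] at h
      rw [liftP, liftV_eq_self V c fun k hk => (h k hk).1,
        liftP_eq_self P c fun k hk => (h k hk).2]
  | .nu a P, c, h => by rw [liftP, liftP_eq_self P c h]
  | .app V W, c, h => by
      simp only [foP, Nat.add_eq_zero_iff] at h
      rw [liftP, liftV_eq_self V c fun k hk => (h k hk).1,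
        liftV_eq_self W c fun k hk => (h k hk).2]
end

/-- A value without free variables. -/
def ClosedV (U : Val) : Prop := ∀ k, foV k U = 0

theorem ClosedV.lift {U : Val} (hU : ClosedV U) : liftV 0 U = U :=
  liftV_eq_self U 0 fun k _ => hU k

-- Only the indices `j < k`, which substitution at `k` does not shift, are needed: the duplicability
-- factor counts occurrences of the variable bound last.
mutual
theorem foV_substV {U : Val} (hU : ClosedV U) :
    ∀ (V : Val) (j k : ℕ), j < k → foV j (substV U k V) = foV j V
  | .star, _, _, _ => rfl
  | .var x, j, k, h => by
      simp only [substV]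
      split_ifs with h1 h2
      · rw [hU j, foV, if_neg (by omega)]
      · rfl
      · rw [foV, foV, if_neg (by omega), if_neg (by omega)]
  | .lam P, j, k, h => by
      rw [substV, hU.lift, foV, foV, foP_substP hU P _ _ (by omega)]
  | .blam P, j, k, h => by
      rw [substV, hU.lift, foV, foV, foP_substP hU P _ _ (by omega)]
  | .bang V, j, k, h => by rw [substV, foV, foV, foV_substV hU V j k h]
theorem foP_substP {U : Val} (hU : ClosedV U) :
    ∀ (P : Proc) (j k : ℕ), j < k → foP j (substP U k P) = foP j P
  | .nil, _, _, _ => rfl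
  | .par P Q, j, k, h => by
      rw [substP, foP, foP, foP_substP hU P j k h, foP_substP hU Q j k h]
  | .inp a P, j, k, h => by
      rw [substP, hU.lift, foP, foP, foP_substP hU P _ _ (by omega)]
  | .binp a P, j, k, h => by
      rw [substP, hU.lift, foP, foP, foP_substP hU P _ _ (by omega)]
  | .out a V P, j, k, h => by
      rw [substP, foP, foP, foV_substV hU V j k h, foP_substP hU P j k h]
  | .nu a P, j, k, h => by rw [substP, foP, foP, foP_substP hU P j k h]
  | .app V W, j, k, h => by
      rw [substP, foP, foP, foV_substV hU V j k h, foV_substV hU W j k h]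
end

mutual
theorem one_le_dV : ∀ V : Val, 1 ≤ dV V
  | .star => le_rfl
  | .var _ => le_rfl
  | .lam P => le_max_of_le_left (one_le_dP P)
  | .blam P => le_max_of_le_left (one_le_dP P)
  | .bang V => one_le_dV V
theorem one_le_dP : ∀ P : Proc, 1 ≤ dP P
  | .nil => le_rfl
  | .par P _ => le_max_of_le_left (one_le_dP P)
  | .inp _ P => le_max_of_le_left (one_le_dP P)
  | .binp _ P => le_max_of_le_left (one_le_dP P)
  | .out _ V _ => le_max_of_le_left (one_le_dV V)
  | .nu _ P => one_le_dP P
  | .app V _ => le_max_of_le_left (one_le_dV V)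
end

mutual
theorem dV_substV_le {U : Val} (hU : ClosedV U) :
    ∀ (V : Val) (k : ℕ), dV (substV U k V) ≤ max (dV V) (dV U)
  | .star, _ => by simp [substV, dV]
  | .var x, k => by
      simp only [substV]
      split_ifs <;> simp [dV]
  | .lam P, k => by
      have := dP_substP_le hU P (k + 1)
      rw [substV, hU.lift, dV, dV, foP_substP hU P _ _ (by omega)]
      omega
  | .blam P, k => by
      have := dP_substP_le hU P (k + 1)
      rw [substV, hU.lift, dV, dV, foP_substP hU P _ _ (by omega)]
      omega
  | .bang V, k => dV_substV_le hU V k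
theorem dP_substP_le {U : Val} (hU : ClosedV U) :
    ∀ (P : Proc) (k : ℕ), dP (substP U k P) ≤ max (dP P) (dV U)
  | .nil, _ => by simp [substP, dP]
  | .par P Q, k => by
      have := dP_substP_le hU P k
      have := dP_substP_le hU Q k
      rw [substP, dP, dP]
      omega
  | .inp a P, k => by
      have := dP_substP_le hU P (k + 1)
      rw [substP, hU.lift, dP, dP, foP_substP hU P _ _ (by omega)]
      omega
  | .binp a P, k => by
      have := dP_substP_le hU P (k + 1)
      rw [substP, hU.lift, dP, dP, foP_substP hU P _ _ (by omega)]
      omega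
  | .out a V P, k => by
      have := dV_substV_le hU V k
      have := dP_substP_le hU P k
      rw [substP, dP, dP]
      omega
  | .nu a P, k => dP_substP_le hU P k
  | .app V W, k => by
      have := dV_substV_le hU V k
      have := dV_substV_le hU W k
      rw [substP, dP, dP]
      omega
end

/-! ### Weighted occurrences -/

mutual
/-- Weighted number of free occurrences of the variable `k` in a value: an occurrence at box
depth `d` counts `n ^ d`. -/
def occV (n k : ℕ) : Val → ℕ
  | .star => 0
  | .var x => if x = k then 1 else 0
  | .lam P => occP n (k + 1) P
  | .blam P => occP n (k + 1) P
  | .bang V => n * occV n k V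
/-- Weighted number of free occurrences of the variable `k` in a process; see `occV`. -/
def occP (n k : ℕ) : Proc → ℕ
  | .nil => 0
  | .par P Q => occP n k P + occP n k Q
  | .inp _ P => occP n (k + 1) P
  | .binp _ P => occP n (k + 1) P
  | .out _ V P => occV n k V + occP n k P
  | .nu _ P => occP n k P
  | .app V W => occV n k V + occV n k W
end

-- Each occurrence of the variable loses its own weight `1` and gains the weight of `U`, both
-- multiplied by `n` for every box around it.
mutual
theorem wV_substV {U : Val} (hU : ClosedV U) (n : ℕ) : ∀ (V : Val) (k : ℕ),
    wV n (substV U k V) + occV n k V = wV n V + occV n k V * wV n U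
  | .star, _ => by simp [substV, wV, occV]
  | .var x, k => by
      simp only [substV, occV]
      split_ifs <;> simp [wV, add_comm]
  | .lam P, k => by
      rw [substV, hU.lift]
      exact wP_substP hU n P (k + 1)
  | .blam P, k => by
      rw [substV, hU.lift]
      exact wP_substP hU n P (k + 1)
  | .bang V, k => by
      have := wV_substV hU n V k
      simp only [substV, wV, occV]
      linear_combination n * this
theorem wP_substP {U : Val} (hU : ClosedV U) (n : ℕ) : ∀ (P : Proc) (k : ℕ),
    wP n (substP U k P) + occP n k P = wP n P + occP n k P * wV n U
  | .nil, _ => by simp [substP, wP, occP]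
  | .par P Q, k => by
      have h1 := wP_substP hU n P k
      have h2 := wP_substP hU n Q k
      simp only [substP, wP, occP]
      linear_combination h1 + h2
  | .inp a P, k => by
      have h1 := wP_substP hU n P (k + 1)
      simp only [substP, hU.lift, wP, occP]
      linear_combination h1
  | .binp a P, k => by
      have h1 := wP_substP hU n P (k + 1)
      simp only [substP, hU.lift, wP, occP]
      linear_combination h1
  | .out a V P, k => by
      have h1 := wV_substV hU n V k
      have h2 := wP_substP hU n P k
      simp only [substP, wP, occP]
      linear_combination h1 + h2
  | .nu a P, k => wP_substP hU n P k
  | .app V W, k => by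
      have h1 := wV_substV hU n V k
      have h2 := wV_substV hU n W k
      simp only [substP, wP, occP]
      linear_combination h1 + h2
end

/-- What a context entry says about the weighted number `o` and the plain number `f` of
occurrences of the variable. -/
def OccSpec (n : ℕ) (e : Option SMark) (o f : ℕ) : Prop :=
  match e with
  | none => o = 0 ∧ f = 0
  | some .lin => o = 1
  | some .bang => o = n
  | some .para => o = f

theorem OccSpec.split {n o₁ o₂ f₁ f₂ : ℕ} {e e₁ e₂ : Option SMark} (s : SplitE e e₁ e₂)
    (h₁ : OccSpec n e₁ o₁ f₁) (h₂ : OccSpec n e₂ o₂ f₂) : OccSpec n e (o₁ + o₂) (f₁ + f₂) := by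
  cases s <;> simp only [OccSpec] at * <;> omega

theorem OccSpec.bang {n o f : ℕ} {e e' : Option SMark} (s : BangE e e')
    (h : OccSpec n e o f) : OccSpec n e' (n * o) f := by
  cases s <;> simp only [OccSpec] at * <;> simp [h]

theorem Split.getD {Γ Γ₁ Γ₂ : Ctx} (s : Split Γ Γ₁ Γ₂) (k : ℕ) :
    SplitE (Γ.getD k none) (Γ₁.getD k none) (Γ₂.getD k none) := by
  induction s generalizing k with
  | nil => exact .none
  | cons h _ ih =>
    cases k with
    | zero => exact h
    | succ k => simpa using ih k

theorem BangCtx.getD {Γ Δ : Ctx} (s : BangCtx Γ Δ) (k : ℕ) :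
    BangE (Γ.getD k none) (Δ.getD k none) := by
  induction s generalizing k with
  | nil => exact .none
  | cons h _ ih =>
    cases k with
    | zero => exact h
    | succ k => simpa using ih k

/-- A variable that may be weakened away may have no occurrence at all. -/
theorem OccSpec.zero {n : ℕ} {e : Option SMark} (h : e = none ∨ e = some .para) :
    OccSpec n e 0 0 := by
  rcases h with rfl | rfl <;> simp [OccSpec]

theorem ParaOnly.getD {Γ : Ctx} (h : ParaOnly Γ) (k : ℕ) :
    Γ.getD k none = none ∨ Γ.getD k none = some .para := by
  by_cases hk : k < Γ.length
  · rw [List.getD_eq_getElem _ _ hk]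
    exact h _ (List.getElem_mem hk)
  · exact .inl (List.getD_eq_default _ _ (by omega))

mutual
theorem occV_spec (n : ℕ) : ∀ {Γ : Ctx} {V : Val}, WfV Γ V → ∀ k : ℕ,
    OccSpec n (Γ.getD k none) (occV n k V) (foV k V)
  | _, _, .star h, k => .zero (h.getD k)
  | _, _, .varLin h, 0 => by simp [OccSpec, occV]
  | _, _, .varLin h, k + 1 => by simpa [occV, foV] using OccSpec.zero (n := n) (h.getD k)
  | _, _, .varPara h, 0 => by simp [OccSpec, occV, foV]
  | _, _, .varPara h, k + 1 => by simpa [occV, foV] using OccSpec.zero (n := n) (h.getD k)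
  | _, _, .varThere he h, 0 => by simpa [occV, foV] using OccSpec.zero (n := n) he
  | _, _, .varThere he h, k + 1 => by simpa [occV, foV] using occV_spec n h k
  | _, _, .lam h, k => by simpa [occV, foV] using occP_spec n h (k + 1)
  | _, _, .blamBang h, k => by simpa [occV, foV] using occP_spec n h (k + 1)
  | _, _, .blamPara h, k => by simpa [occV, foV] using occP_spec n h (k + 1)
  | _, _, .bang s h, k => (occV_spec n h k).bang (s.getD k)
theorem occP_spec (n : ℕ) : ∀ {Γ : Ctx} {P : Proc}, WfP Γ P → ∀ k : ℕ,
    OccSpec n (Γ.getD k none) (occP n k P) (foP k P)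
  | _, _, .nil h, k => .zero (h.getD k)
  | _, _, .par s h₁ h₂, k => .split (s.getD k) (occP_spec n h₁ k) (occP_spec n h₂ k)
  | _, _, .inp h, k => by simpa [occP, foP] using occP_spec n h (k + 1)
  | _, _, .binpBang h, k => by simpa [occP, foP] using occP_spec n h (k + 1)
  | _, _, .binpPara h, k => by simpa [occP, foP] using occP_spec n h (k + 1)
  | _, _, .out s h₁ h₂, k => .split (s.getD k) (occV_spec n h₁ k) (occP_spec n h₂ k)
  | _, _, .nu h, k => occP_spec n h k
  | _, _, .app s h₁ h₂, k => .split (s.getD k) (occV_spec n h₁ k) (occV_spec n h₂ k)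
end

theorem WfV.closed {V : Val} (h : WfV [] V) : ClosedV V := fun k => by
  simpa [OccSpec] using (occV_spec 0 h k).2

/-! ### Invariance under structural congruence -/

-- Renaming a channel affects neither variables nor sizes.
mutual
theorem foV_chV (a b : ℕ) : ∀ (V : Val) (k : ℕ), foV k (chV a b V) = foV k V
  | .star, _ => rfl
  | .var _, _ => rfl
  | .lam P, k => foP_chP a b P (k + 1)
  | .blam P, k => foP_chP a b P (k + 1)
  | .bang V, k => foV_chV a b V k
theorem foP_chP (a b : ℕ) : ∀ (P : Proc) (k : ℕ), foP k (chP a b P) = foP k P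
  | .nil, _ => rfl
  | .par P Q, k => by simp only [chP, foP, foP_chP a b P k, foP_chP a b Q k]
  | .inp _ P, k => foP_chP a b P (k + 1)
  | .binp _ P, k => foP_chP a b P (k + 1)
  | .out _ V P, k => by simp only [chP, foP, foV_chV a b V k, foP_chP a b P k]
  | .nu c P, k => by
      simp only [chP]
      split_ifs
      · rfl
      · exact foP_chP a b P k
  | .app V W, k => by simp only [chP, foP, foV_chV a b V k, foV_chV a b W k]
end

mutual
theorem dV_chV (a b : ℕ) : ∀ V : Val, dV (chV a b V) = dV V
  | .star => rfl
  | .var _ => rfl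
  | .lam P => by simp only [chV, dV, dP_chP a b P, foP_chP]
  | .blam P => by simp only [chV, dV, dP_chP a b P, foP_chP]
  | .bang V => dV_chV a b V
theorem dP_chP (a b : ℕ) : ∀ P : Proc, dP (chP a b P) = dP P
  | .nil => rfl
  | .par P Q => by simp only [chP, dP, dP_chP a b P, dP_chP a b Q]
  | .inp _ P => by simp only [chP, dP, dP_chP a b P, foP_chP]
  | .binp _ P => by simp only [chP, dP, dP_chP a b P, foP_chP]
  | .out _ V P => by simp only [chP, dP, dV_chV a b V, dP_chP a b P]
  | .nu c P => by
      simp only [chP]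
      split_ifs
      · rfl
      · exact dP_chP a b P
  | .app V W => by simp only [chP, dP, dV_chV a b V, dV_chV a b W]
end

mutual
theorem wV_chV (n a b : ℕ) : ∀ V : Val, wV n (chV a b V) = wV n V
  | .star => rfl
  | .var _ => rfl
  | .lam P => wP_chP n a b P
  | .blam P => wP_chP n a b P
  | .bang V => by simp only [chV, wV, wV_chV n a b V]
theorem wP_chP (n a b : ℕ) : ∀ P : Proc, wP n (chP a b P) = wP n P
  | .nil => rfl
  | .par P Q => by simp only [chP, wP, wP_chP n a b P, wP_chP n a b Q]
  | .inp _ P => by simp only [chP, wP, wP_chP n a b P]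
  | .binp _ P => by simp only [chP, wP, wP_chP n a b P]
  | .out _ V P => by simp only [chP, wP, wV_chV n a b V, wP_chP n a b P]
  | .nu c P => by
      simp only [chP]
      split_ifs
      · rfl
      · exact wP_chP n a b P
  | .app V W => by simp only [chP, wP, wV_chV n a b V, wV_chV n a b W]
end

mutual
theorem SCV.fo_eq : ∀ {V W : Val}, SCV V W → ∀ k : ℕ, foV k V = foV k W
  | _, _, .refl _, _ => rfl
  | _, _, .symm h, k => (SCV.fo_eq h k).symm
  | _, _, .trans h₁ h₂, k => (SCV.fo_eq h₁ k).trans (SCV.fo_eq h₂ k)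
  | _, _, .lam h, k => SCP.fo_eq h (k + 1)
  | _, _, .blam h, k => SCP.fo_eq h (k + 1)
  | _, _, .bang h, k => SCV.fo_eq h k
theorem SCP.fo_eq : ∀ {P Q : Proc}, SCP P Q → ∀ k : ℕ, foP k P = foP k Q
  | _, _, .refl _, _ => rfl
  | _, _, .symm h, k => (SCP.fo_eq h k).symm
  | _, _, .trans h₁ h₂, k => (SCP.fo_eq h₁ k).trans (SCP.fo_eq h₂ k)
  | _, _, .par h₁ h₂, k => congrArg₂ (· + ·) (SCP.fo_eq h₁ k) (SCP.fo_eq h₂ k)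
  | _, _, .inp h, k => SCP.fo_eq h (k + 1)
  | _, _, .binp h, k => SCP.fo_eq h (k + 1)
  | _, _, .out h₁ h₂, k => congrArg₂ (· + ·) (SCV.fo_eq h₁ k) (SCP.fo_eq h₂ k)
  | _, _, .nu h, k => SCP.fo_eq h k
  | _, _, .app h₁ h₂, k => congrArg₂ (· + ·) (SCV.fo_eq h₁ k) (SCV.fo_eq h₂ k)
  | _, _, .assoc, _ => (add_assoc _ _ _).symm
  | _, _, .comm, _ => add_comm _ _
  | _, _, .nuswap, _ => rfl
  | _, _, .extrude _, _ => rfl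
  | _, _, .alpha _, k => by simp only [foP, foP_chP]
end

mutual
theorem SCV.d_eq : ∀ {V W : Val}, SCV V W → dV V = dV W
  | _, _, .refl _ => rfl
  | _, _, .symm h => (SCV.d_eq h).symm
  | _, _, .trans h₁ h₂ => (SCV.d_eq h₁).trans (SCV.d_eq h₂)
  | _, _, .lam h => congrArg₂ max (SCP.d_eq h) (h.fo_eq 0)
  | _, _, .blam h => congrArg₂ max (SCP.d_eq h) (h.fo_eq 0)
  | _, _, .bang h => by simp only [dV, SCV.d_eq h]
theorem SCP.d_eq : ∀ {P Q : Proc}, SCP P Q → dP P = dP Q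
  | _, _, .refl _ => rfl
  | _, _, .symm h => (SCP.d_eq h).symm
  | _, _, .trans h₁ h₂ => (SCP.d_eq h₁).trans (SCP.d_eq h₂)
  | _, _, .par h₁ h₂ => congrArg₂ max (SCP.d_eq h₁) (SCP.d_eq h₂)
  | _, _, .inp h => congrArg₂ max (SCP.d_eq h) (h.fo_eq 0)
  | _, _, .binp h => congrArg₂ max (SCP.d_eq h) (h.fo_eq 0)
  | _, _, .out h₁ h₂ => congrArg₂ max (SCV.d_eq h₁) (SCP.d_eq h₂)
  | _, _, .nu h => by simp only [dP, SCP.d_eq h]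
  | _, _, .app h₁ h₂ => congrArg₂ max (SCV.d_eq h₁) (SCV.d_eq h₂)
  | _, _, .assoc => (max_assoc _ _ _).symm
  | _, _, .comm => max_comm _ _
  | _, _, .nuswap => rfl
  | _, _, .extrude _ => rfl
  | _, _, .alpha _ => by simp only [dP, dP_chP]
end

mutual
theorem SCV.w_eq (n : ℕ) : ∀ {V W : Val}, SCV V W → wV n V = wV n W
  | _, _, .refl _ => rfl
  | _, _, .symm h => (SCV.w_eq n h).symm
  | _, _, .trans h₁ h₂ => (SCV.w_eq n h₁).trans (SCV.w_eq n h₂)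
  | _, _, .lam h => SCP.w_eq n h
  | _, _, .blam h => SCP.w_eq n h
  | _, _, .bang h => congrArg (n * · + 1) (SCV.w_eq n h)
theorem SCP.w_eq (n : ℕ) : ∀ {P Q : Proc}, SCP P Q → wP n P = wP n Q
  | _, _, .refl _ => rfl
  | _, _, .symm h => (SCP.w_eq n h).symm
  | _, _, .trans h₁ h₂ => (SCP.w_eq n h₁).trans (SCP.w_eq n h₂)
  | _, _, .par h₁ h₂ => congrArg₂ (· + · + 1) (SCP.w_eq n h₁) (SCP.w_eq n h₂)
  | _, _, .inp h => congrArg (· + 1) (SCP.w_eq n h)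
  | _, _, .binp h => congrArg (· + 1) (SCP.w_eq n h)
  | _, _, .out h₁ h₂ => congrArg₂ (· + ·) (SCV.w_eq n h₁) (SCP.w_eq n h₂)
  | _, _, .nu h => by simp only [wP, SCP.w_eq n h]
  | _, _, .app h₁ h₂ => congrArg₂ (· + · + 1) (SCV.w_eq n h₁) (SCV.w_eq n h₂)
  | _, _, .assoc => by simp only [wP]; omega
  | _, _, .comm => by simp only [wP]; omega
  | _, _, .nuswap => rfl
  | _, _, .extrude _ => rfl
  | _, _, .alpha _ => by simp only [wP, wP_chP]
end

theorem Split.symm {Γ Γ₁ Γ₂ : Ctx} (s : Split Γ Γ₁ Γ₂) : Split Γ Γ₂ Γ₁ := by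
  induction s with
  | nil => exact .nil
  | cons h _ ih => exact .cons (by cases h <;> constructor) ih

theorem SplitE.assoc {e e₁ e₂₃ e₂ e₃ : Option SMark} (s : SplitE e e₁ e₂₃)
    (t : SplitE e₂₃ e₂ e₃) : ∃ e₁₂, SplitE e e₁₂ e₃ ∧ SplitE e₁₂ e₁ e₂ := by
  cases s <;> cases t <;>
    first
    | exact ⟨Option.none, by constructor, by constructor⟩
    | exact ⟨some .para, by constructor, by constructor⟩
    | exact ⟨some .lin, by constructor, by constructor⟩
    | exact ⟨some .bang, by constructor, by constructor⟩

theorem Split.assoc {Γ Γ₁ Γ₂₃ Γ₂ Γ₃ : Ctx} (s : Split Γ Γ₁ Γ₂₃) (t : Split Γ₂₃ Γ₂ Γ₃) :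
    ∃ Γ₁₂, Split Γ Γ₁₂ Γ₃ ∧ Split Γ₁₂ Γ₁ Γ₂ := by
  induction s generalizing Γ₂ Γ₃ with
  | nil => cases t; exact ⟨[], .nil, .nil⟩
  | cons h _ ih =>
    cases t with
    | cons h' t =>
      obtain ⟨e, h₁, h₂⟩ := h.assoc h'
      obtain ⟨Γ', t₁, t₂⟩ := ih t
      exact ⟨e :: Γ', .cons h₁ t₁, .cons h₂ t₂⟩

theorem Split.assoc' {Γ Γ₁₂ Γ₁ Γ₂ Γ₃ : Ctx} (s : Split Γ Γ₁₂ Γ₃) (t : Split Γ₁₂ Γ₁ Γ₂) :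
    ∃ Γ₂₃, Split Γ Γ₁ Γ₂₃ ∧ Split Γ₂₃ Γ₂ Γ₃ := by
  obtain ⟨Γ', h₁, h₂⟩ := s.symm.assoc t.symm
  exact ⟨Γ', h₁.symm, h₂.symm⟩

-- Inversion of the formation rules as equivalences, so that invariance of well-formation under
-- the symmetric relation of structural congruence can be proved by rewriting.
section Inversion

variable {Γ : Ctx} {V W : Val} {P Q : Proc} {a : ℕ}

theorem wfV_lam : WfV Γ (.lam P) ↔ WfP (some .lin :: Γ) P :=
  ⟨fun h => by cases h; assumption, .lam⟩

theorem wfV_blam :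
    WfV Γ (.blam P) ↔ WfP (some .bang :: Γ) P ∨ WfP (some .para :: Γ) P :=
  ⟨fun h => by cases h with
    | blamBang h => exact .inl h
    | blamPara h => exact .inr h, fun h => h.elim .blamBang .blamPara⟩

theorem wfV_bang : WfV Γ (.bang V) ↔ ∃ Δ, BangCtx Δ Γ ∧ WfV Δ V :=
  ⟨fun h => by cases h with
    | bang s h => exact ⟨_, s, h⟩, fun ⟨_, s, h⟩ => .bang s h⟩

theorem wfP_par : WfP Γ (.par P Q) ↔ ∃ Γ₁ Γ₂, Split Γ Γ₁ Γ₂ ∧ WfP Γ₁ P ∧ WfP Γ₂ Q :=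
  ⟨fun h => by cases h with
    | par s h₁ h₂ => exact ⟨_, _, s, h₁, h₂⟩, fun ⟨_, _, s, h₁, h₂⟩ => .par s h₁ h₂⟩

theorem wfP_inp : WfP Γ (.inp a P) ↔ WfP (some .lin :: Γ) P :=
  ⟨fun h => by cases h; assumption, .inp⟩

theorem wfP_binp :
    WfP Γ (.binp a P) ↔ WfP (some .bang :: Γ) P ∨ WfP (some .para :: Γ) P :=
  ⟨fun h => by cases h with
    | binpBang h => exact .inl h
    | binpPara h => exact .inr h, fun h => h.elim .binpBang .binpPara⟩

theorem wfP_out : WfP Γ (.out a V P) ↔ ∃ Γ₁ Γ₂, Split Γ Γ₁ Γ₂ ∧ WfV Γ₁ V ∧ WfP Γ₂ P :=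
  ⟨fun h => by cases h with
    | out s h₁ h₂ => exact ⟨_, _, s, h₁, h₂⟩, fun ⟨_, _, s, h₁, h₂⟩ => .out s h₁ h₂⟩

theorem wfP_nu : WfP Γ (.nu a P) ↔ WfP Γ P :=
  ⟨fun h => by cases h; assumption, .nu⟩

theorem wfP_app : WfP Γ (.app V W) ↔ ∃ Γ₁ Γ₂, Split Γ Γ₁ Γ₂ ∧ WfV Γ₁ V ∧ WfV Γ₂ W :=
  ⟨fun h => by cases h with
    | app s h₁ h₂ => exact ⟨_, _, s, h₁, h₂⟩, fun ⟨_, _, s, h₁, h₂⟩ => .app s h₁ h₂⟩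

end Inversion

mutual
theorem wfV_chV (a b : ℕ) : ∀ (V : Val) (Γ : Ctx), WfV Γ (chV a b V) ↔ WfV Γ V
  | .star, _ => Iff.rfl
  | .var _, _ => Iff.rfl
  | .lam P, Γ => by simp only [chV, wfV_lam, wfP_chP a b P]
  | .blam P, Γ => by simp only [chV, wfV_blam, wfP_chP a b P]
  | .bang V, Γ => by simp only [chV, wfV_bang, wfV_chV a b V]
theorem wfP_chP (a b : ℕ) : ∀ (P : Proc) (Γ : Ctx), WfP Γ (chP a b P) ↔ WfP Γ P
  | .nil, _ => Iff.rfl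
  | .par P Q, Γ => by simp only [chP, wfP_par, wfP_chP a b P, wfP_chP a b Q]
  | .inp _ P, Γ => by simp only [chP, wfP_inp, wfP_chP a b P]
  | .binp _ P, Γ => by simp only [chP, wfP_binp, wfP_chP a b P]
  | .out _ V P, Γ => by simp only [chP, wfP_out, wfV_chV a b V, wfP_chP a b P]
  | .nu c P, Γ => by
      simp only [chP]
      split_ifs
      · rfl
      · simp only [wfP_nu, wfP_chP a b P]
  | .app V W, Γ => by simp only [chP, wfP_app, wfV_chV a b V, wfV_chV a b W]
end

mutual
theorem SCV.wf_iff : ∀ {V W : Val}, SCV V W → ∀ Γ : Ctx, WfV Γ V ↔ WfV Γ W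
  | _, _, .refl _, _ => Iff.rfl
  | _, _, .symm h, Γ => (SCV.wf_iff h Γ).symm
  | _, _, .trans h₁ h₂, Γ => (SCV.wf_iff h₁ Γ).trans (SCV.wf_iff h₂ Γ)
  | _, _, .lam h, Γ => by simp only [wfV_lam, SCP.wf_iff h]
  | _, _, .blam h, Γ => by simp only [wfV_blam, SCP.wf_iff h]
  | _, _, .bang h, Γ => by simp only [wfV_bang, SCV.wf_iff h]
theorem SCP.wf_iff : ∀ {P Q : Proc}, SCP P Q → ∀ Γ : Ctx, WfP Γ P ↔ WfP Γ Q
  | _, _, .refl _, _ => Iff.rfl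
  | _, _, .symm h, Γ => (SCP.wf_iff h Γ).symm
  | _, _, .trans h₁ h₂, Γ => (SCP.wf_iff h₁ Γ).trans (SCP.wf_iff h₂ Γ)
  | _, _, .par h₁ h₂, Γ => by simp only [wfP_par, SCP.wf_iff h₁, SCP.wf_iff h₂]
  | _, _, .inp h, Γ => by simp only [wfP_inp, SCP.wf_iff h]
  | _, _, .binp h, Γ => by simp only [wfP_binp, SCP.wf_iff h]
  | _, _, .out h₁ h₂, Γ => by simp only [wfP_out, SCV.wf_iff h₁, SCP.wf_iff h₂]
  | _, _, .nu h, Γ => by simp only [wfP_nu, SCP.wf_iff h]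
  | _, _, .app h₁ h₂, Γ => by simp only [wfP_app, SCV.wf_iff h₁, SCV.wf_iff h₂]
  | _, _, .assoc, Γ => by
      simp only [wfP_par]
      constructor
      · rintro ⟨_, _, s, hP, _, _, t, hQ, hR⟩
        obtain ⟨_, s', t'⟩ := s.assoc t
        exact ⟨_, _, s', ⟨_, _, t', hP, hQ⟩, hR⟩
      · rintro ⟨_, _, s, ⟨_, _, t, hP, hQ⟩, hR⟩
        obtain ⟨_, s', t'⟩ := s.assoc' t
        exact ⟨_, _, s', hP, _, _, t', hQ, hR⟩
  | _, _, .comm, Γ => by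
      simp only [wfP_par]
      constructor <;> exact fun ⟨_, _, s, h₁, h₂⟩ => ⟨_, _, s.symm, h₂, h₁⟩
  | _, _, .nuswap, Γ => by simp only [wfP_nu]
  | _, _, .extrude _, Γ => by simp only [wfP_nu, wfP_par]
  | _, _, .alpha _, Γ => by simp only [wfP_nu, wfP_chP]
end

/-! ### Decrease of the weight -/

mutual
theorem wV_mono {m n : ℕ} (h : m ≤ n) : ∀ V : Val, wV m V ≤ wV n V
  | .star => le_rfl
  | .var _ => le_rfl
  | .lam P => wP_mono h P
  | .blam P => wP_mono h P
  | .bang V => Nat.succ_le_succ (Nat.mul_le_mul h (wV_mono h V))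
theorem wP_mono {m n : ℕ} (h : m ≤ n) : ∀ P : Proc, wP m P ≤ wP n P
  | .nil => le_rfl
  | .par P Q => Nat.succ_le_succ (Nat.add_le_add (wP_mono h P) (wP_mono h Q))
  | .inp _ P => Nat.succ_le_succ (wP_mono h P)
  | .binp _ P => Nat.succ_le_succ (wP_mono h P)
  | .out _ V P => Nat.add_le_add (wV_mono h V) (wP_mono h P)
  | .nu _ P => wP_mono h P
  | .app V W => Nat.succ_le_succ (Nat.add_le_add (wV_mono h V) (wV_mono h W))
end

theorem Split.of_nil {Γ₁ Γ₂ : Ctx} (s : Split [] Γ₁ Γ₂) : Γ₁ = [] ∧ Γ₂ = [] := by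
  cases s; exact ⟨rfl, rfl⟩

theorem closedV_of_wfV_bang {V : Val} (h : WfV [] (.bang V)) : ClosedV V := by
  obtain ⟨_, s, h⟩ := wfV_bang.1 h
  cases s
  exact h.closed

theorem wP_substP_lin {P : Proc} {U : Val} (hU : ClosedV U) (h : WfP [some .lin] P) (n : ℕ) :
    wP n (substP U 0 P) + 1 = wP n P + wV n U := by
  have ho : occP n 0 P = 1 := occP_spec n h 0
  simpa [ho] using wP_substP hU n P 0

/-- The nonlinear substitution costs at most `n` weighted copies of the substituted value, whether
the variable occurs once inside a box or at most `n` times outside boxes. -/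
theorem wP_substP_nonlin {P : Proc} {U : Val} (hU : ClosedV U)
    (h : WfP [some .bang] P ∨ WfP [some .para] P) {n : ℕ} (hn : foP 0 P ≤ n) :
    wP n (substP U 0 P) ≤ wP n P + n * wV n U := by
  have ho : occP n 0 P ≤ n := by
    rcases h with h | h
    · exact (occP_spec n h 0 : occP n 0 P = n).le
    · exact (occP_spec n h 0 : occP n 0 P = foP 0 P).trans_le hn
  have := wP_substP hU n P 0
  have := Nat.mul_le_mul_right (wV n U) ho
  omega

/-- The inductive form of the theorem. The weight is compared for every parameter from `dP Q` on,
since the factor of a subprocess may be smaller than that of the whole process. -/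
theorem Red.measures {Q P : Proc} (r : Red Q P) (h : WfP [] Q) :
    dP P ≤ dP Q ∧ ∀ n, dP Q ≤ n → wP n P < wP n Q := by
  induction r with
  | @comm a V P Q =>
    obtain ⟨_, _, s, h₁, h₂⟩ := wfP_par.1 h
    obtain ⟨rfl, rfl⟩ := s.of_nil
    obtain ⟨_, _, s, hV, -⟩ := wfP_out.1 h₁
    obtain ⟨rfl, rfl⟩ := s.of_nil
    have hQ := wfP_inp.1 h₂
    have hd := dP_substP_le hV.closed Q 0
    simp only [dP, wP]
    refine ⟨by omega, fun n _ => ?_⟩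
    have := wP_substP_lin hV.closed hQ n
    omega
  | @bcomm a V P Q =>
    obtain ⟨_, _, s, h₁, h₂⟩ := wfP_par.1 h
    obtain ⟨rfl, rfl⟩ := s.of_nil
    obtain ⟨_, _, s, hV, -⟩ := wfP_out.1 h₁
    obtain ⟨rfl, rfl⟩ := s.of_nil
    have hV := closedV_of_wfV_bang hV
    have hQ := wfP_binp.1 h₂
    have hd := dP_substP_le hV Q 0
    simp only [dP, dV, wP, wV]
    refine ⟨by omega, fun n hn => ?_⟩
    have := wP_substP_nonlin hV hQ (n := n) (by omega)
    omega
  | @beta P V =>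
    obtain ⟨_, _, s, h₁, hV⟩ := wfP_app.1 h
    obtain ⟨rfl, rfl⟩ := s.of_nil
    have hP := wfV_lam.1 h₁
    have hd := dP_substP_le hV.closed P 0
    simp only [dP, dV, wP, wV]
    refine ⟨by omega, fun n _ => ?_⟩
    have := wP_substP_lin hV.closed hP n
    omega
  | @bbeta P V =>
    obtain ⟨_, _, s, h₁, hV⟩ := wfP_app.1 h
    obtain ⟨rfl, rfl⟩ := s.of_nil
    have hV := closedV_of_wfV_bang hV
    have hP := wfV_blam.1 h₁
    have hd := dP_substP_le hV P 0
    simp only [dP, dV, wP, wV]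
    refine ⟨by omega, fun n hn => ?_⟩
    have := wP_substP_nonlin hV hP (n := n) (by omega)
    omega
  | parL _ ih =>
    obtain ⟨_, _, s, h₁, -⟩ := wfP_par.1 h
    obtain ⟨rfl, rfl⟩ := s.of_nil
    obtain ⟨hd, hw⟩ := ih h₁
    simp only [dP, wP]
    refine ⟨by omega, fun n hn => ?_⟩
    have := hw n (by omega)
    omega
  | res _ ih => exact ih (wfP_nu.1 h)
  | struct s _ t ih =>
    obtain ⟨hd, hw⟩ := ih ((s.wf_iff []).1 h)
    rw [s.d_eq, ← t.d_eq]
    refine ⟨hd, fun n hn => ?_⟩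
    rw [s.w_eq n, ← t.w_eq n]
    exact hw n hn

/-- The weight strictly decreases under reduction of well-formed soft
processes. -/
theorem weight_strictly_decreases {Q P : Proc} (h : WfP [] Q) (r : Red Q P) :
    weightP P < weightP Q := by
  obtain ⟨hd, hw⟩ := r.measures h
  exact (wP_mono hd P).trans_lt (hw _ le_rfl)
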